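/- arXiv:2310.12136 — 2 statements merged into one kernel-verified Lean document; each statement's English description precedes it below -/
import Mathlib

section
/- Let x ∈ Σ = {0,1}^ℕ, ℓ ≥ 1 and n ≥ 2 be integers, and ε = 2^{-h} with h ∈ ℕ. Then N_ℓ(x,n,ε) = N_{ℓ+h−1}(x,n+h−1,ε₀); P_ℓ(x,n,ε) = θ·P_{ℓ+h−1}(x,n+h−1,ε₀); P≥_ℓ(x,n,ε) = θ·P≥_{ℓ+h−1}(x,n+h−1,ε₀); and RR_ℓ(x,n,ε) = θ·[RR_{ℓ+h−1}(x,n+h−1,ε₀) − (h−1)·P≥_{ℓ+h−1}(x,n+h−1,ε₀)], where θ = ((n+h−1)² − (n+h−1))/(n² − n) and ε₀ = 1/2. -/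
open Filter Topology MeasureTheory

namespace RQA

/-- The standard metric on symbolic sequences over an alphabet `α`:
`ρ(x,y) = 2^{-min{i : x i ≠ y i}}` for `x ≠ y` and `ρ(x,x) = 0`. -/
noncomputable def seqDist {α : Type*} (x y : ℕ → α) : ℝ :=
  haveI := Classical.propDecidable (x = y)
  if x = y then 0 else (2 : ℝ) ^ (-((sInf {i : ℕ | x i ≠ y i} : ℕ) : ℤ))

/-- The (one-sided) shift on sequences. -/
def shift {α : Type*} (x : ℕ → α) : ℕ → α := fun i => x (i + 1)

/-- The embedded sequence `x^{(m)}`, a sequence over the alphabet `α^m`. -/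
def embedSeq {α : Type*} (m : ℕ) (x : ℕ → α) : ℕ → (Fin m → α) :=
  fun j t => x (j + (t : ℕ))

section RQAdefs

variable {X : Type*} (d : X → X → ℝ) (f : X → X) (x : X)

/-- The entry of the recurrence plot at `(i,j)` equals `1`. -/
def RPone (ε : ℝ) (i j : ℕ) : Prop := d (f^[i] x) (f^[j] x) ≤ ε

/-- `(i, j, l)` is a diagonal line in the recurrence plot `RP(x, n, ε)`. -/
def IsLine (n : ℕ) (ε : ℝ) (i j l : ℕ) : Prop :=
  1 ≤ l ∧ i + l ≤ n ∧ j + l ≤ n ∧ i ≠ j ∧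
  (∀ h, h < l → RPone d f x ε (i + h) (j + h)) ∧
  (0 < i → 0 < j → ¬ RPone d f x ε (i - 1) (j - 1)) ∧
  (max i j + l < n → ¬ RPone d f x ε (i + l) (j + l))

/-- `N_l(x, n, ε)`: the number of diagonal lines of length exactly `l`. -/
noncomputable def Nlines (n : ℕ) (ε : ℝ) (l : ℕ) : ℕ :=
  Set.ncard {p : ℕ × ℕ | IsLine d f x n ε p.1 p.2 l}

/-- `P_l(x, n, ε) = N_l/(n² − n)`. -/
noncomputable def Pline (n : ℕ) (ε : ℝ) (l : ℕ) : ℝ :=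
  (Nlines d f x n ε l : ℝ) / ((n : ℝ) ^ 2 - (n : ℝ))

/-- `P≥_ℓ(x, n, ε) = Σ_{l ≥ ℓ} P_l`. -/
noncomputable def PlineGe (n : ℕ) (ε : ℝ) (ℓ : ℕ) : ℝ :=
  ∑' k : ℕ, Pline d f x n ε (ℓ + k)

/-- The recurrence rate `RR_ℓ(x, n, ε) = Σ_{l ≥ ℓ} l · P_l`. -/
noncomputable def RRate (n : ℕ) (ε : ℝ) (ℓ : ℕ) : ℝ :=
  ∑' k : ℕ, ((ℓ + k : ℕ) : ℝ) * Pline d f x n ε (ℓ + k)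

/-- The determinism `DET_ℓ(x, n, ε) = RR_ℓ/RR_1`. -/
noncomputable def DETrm (n : ℕ) (ε : ℝ) (ℓ : ℕ) : ℝ :=
  RRate d f x n ε ℓ / RRate d f x n ε 1

/-- The average line length `L_ℓ(x, n, ε) = RR_ℓ/P≥_ℓ`. -/
noncomputable def LAvg (n : ℕ) (ε : ℝ) (ℓ : ℕ) : ℝ :=
  RRate d f x n ε ℓ / PlineGe d f x n ε ℓ

/-- The entropy of line lengths
`ENT_ℓ(x, n, ε) = log P≥_ℓ − (1/P≥_ℓ)·Σ_{l≥ℓ} P_l · log P_l` (with `0·log 0 = 0`). -/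
noncomputable def ENTln (n : ℕ) (ε : ℝ) (ℓ : ℕ) : ℝ :=
  Real.log (PlineGe d f x n ε ℓ) -
    (PlineGe d f x n ε ℓ)⁻¹ *
      ∑' k : ℕ, Pline d f x n ε (ℓ + k) * Real.log (Pline d f x n ε (ℓ + k))

/-- The correlation sum
`C_ℓ(x, n, ε) = n^{-2}·#{(i,j) ∈ [0,n)² : d_ℓ(f^i x, f^j x) ≤ ε}`,
where `d_ℓ` is the Bowen metric. -/
noncomputable def corrSum (ℓ n : ℕ) (ε : ℝ) : ℝ :=
  (Set.ncard {p : ℕ × ℕ | p.1 < n ∧ p.2 < n ∧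
      ∀ k, k < ℓ → d (f^[p.1 + k] x) (f^[p.2 + k] x) ≤ ε} : ℝ) / (n : ℝ) ^ 2

end RQAdefs

/-- The extension of a substitution to a morphism of the free monoid of finite words. -/
def substWord (ζ : Bool → List Bool) : List Bool → List Bool :=
  fun w => w.foldr (fun a r => ζ a ++ r) []

/-- `ζ` is a (binary) substitution of constant length `q ≥ 2`. -/
def IsConstLenSubst (ζ : Bool → List Bool) (q : ℕ) : Prop :=
  2 ≤ q ∧ ∀ a : Bool, (ζ a).length = q

/-- The language `L_ζ`: subwords of the words `ζ^k(a)`, `a ∈ A`, `k ≥ 1`. -/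
def substLang (ζ : Bool → List Bool) : Set (List Bool) :=
  {w | ∃ a : Bool, ∃ k : ℕ, 1 ≤ k ∧ w <:+: (substWord ζ)^[k] [a]}

/-- The substitution subshift `X_ζ`. -/
def SubstShift (ζ : Bool → List Bool) : Set (ℕ → Bool) :=
  {y | ∀ n : ℕ, (List.ofFn fun t : Fin n => y (t : ℕ)) ∈ substLang ζ}

/-- `ζ` is primitive. -/
def IsPrimitive (ζ : Bool → List Bool) : Prop :=
  ∃ k : ℕ, 1 ≤ k ∧ ∀ a b : Bool, b ∈ (substWord ζ)^[k] [a]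

/-- `ζ` is aperiodic: `X_ζ` contains a non-periodic sequence. -/
def IsAperiodic (ζ : Bool → List Bool) : Prop :=
  ∃ y ∈ SubstShift ζ, ∀ p : ℕ, 1 ≤ p → ∃ i : ℕ, y (i + p) ≠ y i

/-- The action of a constant length-`q` substitution on infinite sequences. -/
def substSeq (ζ : Bool → List Bool) (q : ℕ) (x : ℕ → Bool) : ℕ → Bool :=
  fun i => (ζ (x (i / q))).getD (i % q) false

/-- `(i, j, l)` is a line in the infinite symbolic recurrence plot `RP(x, ∞, ε₀)`. -/
def IsInfLine (x : ℕ → Bool) (i j l : ℕ) : Prop :=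
  1 ≤ l ∧ i ≠ j ∧ (∀ h, h < l → x (i + h) = x (j + h)) ∧
  (0 < i → 0 < j → x (i - 1) ≠ x (j - 1)) ∧ x (i + l) ≠ x (j + l)

/-- `K_l`: the set of starting points `(i,j)`, `i,j ≥ 1`, of inner lines of length `l`
in the infinite symbolic recurrence plot. -/
def Kset (x : ℕ → Bool) (l : ℕ) : Set (ℕ × ℕ) :=
  {p | 1 ≤ p.1 ∧ 1 ≤ p.2 ∧ IsInfLine x p.1 p.2 l}

/-- `#(M ∩ [0,n)²)/n²`. -/
noncomputable def densCount (M : Set (ℕ × ℕ)) (n : ℕ) : ℝ :=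
  (Set.ncard (M ∩ {p : ℕ × ℕ | p.1 < n ∧ p.2 < n}) : ℝ) / (n : ℝ) ^ 2

/-- `M ⊆ ℕ²` has asymptotic density `a`. -/
def HasDens (M : Set (ℕ × ℕ)) (a : ℝ) : Prop :=
  Tendsto (densCount M) atTop (𝓝 a)

/-- `δ_l(n) = #(K_l ∩ [1,n)²)/(n² − n)`. -/
noncomputable def deltaK (x : ℕ → Bool) (l n : ℕ) : ℝ :=
  (Set.ncard (Kset x l ∩ {p : ℕ × ℕ | p.1 < n ∧ p.2 < n}) : ℝ) / ((n : ℝ) ^ 2 - (n : ℝ))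

/-- `M` is a minimal subset of the subshift `Y`. -/
def IsMinimalSubset (Y M : Set (ℕ → Bool)) : Prop :=
  M ⊆ Y ∧ M.Nonempty ∧ IsClosed M ∧ (∀ z ∈ M, shift z ∈ M) ∧
  ∀ M' : Set (ℕ → Bool), M' ⊆ M → M'.Nonempty → IsClosed M' →
    (∀ z ∈ M', shift z ∈ M') → M' = M

end RQA

open RQA

/-!
For `ε = 2^{-h}`, the entry of the recurrence plot at `(i, j)` is `1` iff `x` agrees on the windows
of length `h` starting at `i` and `j`, i.e. iff the `h` consecutive entries of the symbolic plot
(`ε₀ = 1/2`) on the diagonal from `(i, j)` on are all `1`. A maximal run of length `l` in such a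
plot is therefore a maximal run of length `l + h - 1`, with the same starting point, in a symbolic
plot with `h - 1` further rows and columns. So the line counts agree up to this shift of the
length, and the other quantifiers follow by renormalizing and summing.
-/

namespace RQA

/-- `R` is the diagonal erosion of `S` by a window of length `m + 1`: an entry of `R` is `1` iff it
starts a run of `m + 1` ones on its diagonal in `S`. The window length is written `m + 1` so that
`m` is the amount by which lines get shorter. -/
def IsDiagErosion (m : ℕ) (R S : ℕ → ℕ → Prop) : Prop :=
  ∀ i j, R i j ↔ ∀ t < m + 1, S (i + t) (j + t)

/-- The factor `θ = (N² - N) / (n² - n)` which converts line densities of a recurrence plot of size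
`N` into those of one of size `n`. -/
noncomputable def sizeRatio (N n : ℕ) : ℝ :=
  ((N : ℝ) ^ 2 - (N : ℝ)) / ((n : ℝ) ^ 2 - (n : ℝ))

namespace IsDiagErosion

variable {m l i j : ℕ} {R S : ℕ → ℕ → Prop}

theorem iff_of_forall_succ (hRS : IsDiagErosion m R S)
    (hS : ∀ t < m, S (i + 1 + t) (j + 1 + t)) : R i j ↔ S i j := by
  simp only [add_right_comm _ 1] at hS
  rw [hRS i j, Nat.forall_lt_succ_left]
  exact and_iff_left hS

theorem iff_add_of_forall_lt (hRS : IsDiagErosion m R S) (hS : ∀ t < m, S (i + t) (j + t)) :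
    R i j ↔ S (i + m) (j + m) := by
  rw [hRS i j, Nat.forall_lt_succ_right]
  exact and_iff_right hS

theorem forall_lt_iff (hRS : IsDiagErosion m R S) (hl : 1 ≤ l) :
    (∀ k < l, R (i + k) (j + k)) ↔ ∀ k < l + m, S (i + k) (j + k) := by
  simp only [hRS _ _, add_assoc]
  constructor
  · intro hwindows k hk
    obtain ⟨a, ha, t, ht, rfl⟩ : ∃ a < l, ∃ t < m + 1, a + t = k :=
      ⟨min k (l - 1), by omega, k - min k (l - 1), by omega, by omega⟩
    exact hwindows a ha t ht
  · intro hrun a ha t ht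
    exact hrun (a + t) (by omega)

end IsDiagErosion

section Quantifiers

variable {X Y : Type*} {d : X → X → ℝ} {f : X → X} {x : X} {e : Y → Y → ℝ} {g : Y → Y} {y : Y}
  {ε δ : ℝ} {m n l ℓ : ℕ}

theorem IsDiagErosion.isLine_iff (hRS : IsDiagErosion m (RPone d f x ε) (RPone e g y δ))
    (hl : 1 ≤ l) {i j : ℕ} :
    IsLine d f x n ε i j l ↔ IsLine e g y (n + m) δ i j (l + m) := by
  unfold IsLine
  rw [hRS.forall_lt_iff hl]
  refine and_congr (by omega) <| and_congr (by omega) <| and_congr (by omega) <|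
    and_congr_right fun _ => and_congr_right fun hrun => and_congr ?before ?after
  case before =>
    refine imp_congr_right fun hi => imp_congr_right fun hj => not_congr ?_
    refine hRS.iff_of_forall_succ fun t ht => ?_
    rw [Nat.sub_add_cancel hi, Nat.sub_add_cancel hj]
    exact hrun t (by omega)
  case after =>
    refine imp_congr (by omega) (not_congr ?_)
    rw [← add_assoc, ← add_assoc]
    refine hRS.iff_add_of_forall_lt fun t ht => ?_
    rw [add_assoc, add_assoc]
    exact hrun (l + t) (by omega)

theorem IsDiagErosion.Nlines_eq (hRS : IsDiagErosion m (RPone d f x ε) (RPone e g y δ))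
    (hl : 1 ≤ l) : Nlines d f x n ε l = Nlines e g y (n + m) δ (l + m) := by
  simp only [Nlines, hRS.isLine_iff hl]

theorem IsDiagErosion.Pline_eq (hRS : IsDiagErosion m (RPone d f x ε) (RPone e g y δ))
    (hn : 2 ≤ n) (hl : 1 ≤ l) :
    Pline d f x n ε l = sizeRatio (n + m) n * Pline e g y (n + m) δ (l + m) := by
  have hN : (2 : ℝ) ≤ (n + m : ℕ) := by exact_mod_cast hn.trans (Nat.le_add_right n m)
  have hpairs : ((n + m : ℕ) : ℝ) ^ 2 - (n + m : ℕ) ≠ 0 := by nlinarith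
  rw [Pline, Pline, sizeRatio, hRS.Nlines_eq hl, div_mul_div_comm, mul_comm (_ - _),
    mul_div_mul_right _ _ hpairs]

theorem IsDiagErosion.PlineGe_eq (hRS : IsDiagErosion m (RPone d f x ε) (RPone e g y δ))
    (hn : 2 ≤ n) (hℓ : 1 ≤ ℓ) :
    PlineGe d f x n ε ℓ = sizeRatio (n + m) n * PlineGe e g y (n + m) δ (ℓ + m) := by
  rw [PlineGe, PlineGe, ← tsum_mul_left]
  refine tsum_congr fun k => ?_
  rw [hRS.Pline_eq hn (hℓ.trans (Nat.le_add_right ℓ k)), add_right_comm]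

theorem Nlines_eq_zero_of_lt (hl : n < l) : Nlines d f x n ε l = 0 := by
  have hempty : {p : ℕ × ℕ | IsLine d f x n ε p.1 p.2 l} = ∅ :=
    Set.eq_empty_of_forall_notMem fun _ hp => by
      have := hp.2.1
      omega
  rw [Nlines, hempty, Set.ncard_empty]

theorem summable_mul_Pline (c : ℕ → ℝ) : Summable fun k => c k * Pline d f x n ε (ℓ + k) := by
  refine summable_of_ne_finset_zero (s := Finset.range (n + 1)) fun k hk => ?_
  have hlong : n < ℓ + k := by
    rw [Finset.mem_range] at hk
    omega
  rw [Pline, Nlines_eq_zero_of_lt hlong, Nat.cast_zero, zero_div, mul_zero]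

theorem IsDiagErosion.RRate_eq (hRS : IsDiagErosion m (RPone d f x ε) (RPone e g y δ))
    (hn : 2 ≤ n) (hℓ : 1 ≤ ℓ) :
    RRate d f x n ε ℓ = sizeRatio (n + m) n *
      (RRate e g y (n + m) δ (ℓ + m) - m * PlineGe e g y (n + m) δ (ℓ + m)) := by
  rw [RRate, RRate, PlineGe, ← tsum_mul_left (a := (m : ℝ)),
    ← (summable_mul_Pline _).tsum_sub (summable_mul_Pline fun _ => (m : ℝ)), ← tsum_mul_left]
  refine tsum_congr fun k => ?_
  rw [hRS.Pline_eq hn (hℓ.trans (Nat.le_add_right ℓ k)), add_right_comm ℓ k m]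
  push_cast
  ring

end Quantifiers

section Symbolic

variable {α : Type*}

theorem seqDist_le_two_zpow_neg_iff {x y : ℕ → α} {h : ℕ} :
    seqDist x y ≤ (2 : ℝ) ^ (-(h : ℤ)) ↔ ∀ t < h, x t = y t := by
  unfold seqDist
  split_ifs with hxy
  · simp only [hxy, implies_true, iff_true]
    positivity
  · have hne : {i | x i ≠ y i}.Nonempty := Function.ne_iff.mp hxy
    rw [zpow_le_zpow_iff_right₀ one_lt_two, neg_le_neg_iff, Nat.cast_le,
      le_csInf_iff (OrderBot.bddBelow _) hne]
    exact forall_congr' fun t => by rw [← not_lt, Set.mem_ofPred_eq, not_imp_not]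

theorem shift_iterate_apply (x : ℕ → α) (i t : ℕ) : shift^[i] x t = x (i + t) := by
  induction i generalizing t with
  | zero => rw [Function.iterate_zero_apply, zero_add]
  | succ i ih => rw [Function.iterate_succ_apply', shift, ih, add_right_comm, add_assoc]

theorem RPone_seqDist_shift_iff {x : ℕ → α} {h i j : ℕ} :
    RPone seqDist shift x ((2 : ℝ) ^ (-(h : ℤ))) i j ↔ ∀ t < h, x (i + t) = x (j + t) := by
  simp only [RPone, seqDist_le_two_zpow_neg_iff, shift_iterate_apply]

theorem RPone_seqDist_shift_half_iff {x : ℕ → α} {i j : ℕ} :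
    RPone seqDist shift x (1 / 2) i j ↔ x i = x j := by
  have hhalf : (1 / 2 : ℝ) = 2 ^ (-((1 : ℕ) : ℤ)) := by norm_num
  simp only [hhalf, RPone_seqDist_shift_iff, Nat.lt_one_iff, forall_eq, add_zero]

theorem isDiagErosion_seqDist_shift (x : ℕ → α) (m : ℕ) :
    IsDiagErosion m (RPone seqDist shift x ((2 : ℝ) ^ (-((m + 1 : ℕ) : ℤ))))
      (RPone seqDist shift x (1 / 2)) := fun i j => by
  simp only [RPone_seqDist_shift_iff, RPone_seqDist_shift_half_iff]

end Symbolic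

end RQA

theorem quantifiers_general_eps_general {α : Type*}
    (x : ℕ → α) (ℓ n h : ℕ) (hℓ : 1 ≤ ℓ) (hn : 2 ≤ n) (hh : 1 ≤ h) :
    Nlines seqDist shift x n ((2:ℝ) ^ (-(h:ℤ))) ℓ
      = Nlines seqDist shift x (n + h - 1) (1/2 : ℝ) (ℓ + h - 1) ∧
    Pline seqDist shift x n ((2:ℝ) ^ (-(h:ℤ))) ℓ
      = (((n + h - 1 : ℕ) : ℝ) ^ 2 - ((n + h - 1 : ℕ) : ℝ)) / ((n : ℝ) ^ 2 - (n : ℝ))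
        * Pline seqDist shift x (n + h - 1) (1/2 : ℝ) (ℓ + h - 1) ∧
    PlineGe seqDist shift x n ((2:ℝ) ^ (-(h:ℤ))) ℓ
      = (((n + h - 1 : ℕ) : ℝ) ^ 2 - ((n + h - 1 : ℕ) : ℝ)) / ((n : ℝ) ^ 2 - (n : ℝ))
        * PlineGe seqDist shift x (n + h - 1) (1/2 : ℝ) (ℓ + h - 1) ∧
    RRate seqDist shift x n ((2:ℝ) ^ (-(h:ℤ))) ℓ
      = (((n + h - 1 : ℕ) : ℝ) ^ 2 - ((n + h - 1 : ℕ) : ℝ)) / ((n : ℝ) ^ 2 - (n : ℝ))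
        * (RRate seqDist shift x (n + h - 1) (1/2 : ℝ) (ℓ + h - 1)
            - ((h : ℝ) - 1) * PlineGe seqDist shift x (n + h - 1) (1/2 : ℝ) (ℓ + h - 1)) := by
  obtain ⟨m, rfl⟩ := Nat.exists_eq_add_of_le' hh
  have hRS := isDiagErosion_seqDist_shift x m
  refine ⟨hRS.Nlines_eq hℓ, hRS.Pline_eq hn hℓ, hRS.PlineGe_eq hn hℓ, ?_⟩
  have hm : ((m + 1 : ℕ) : ℝ) - 1 = m := by rw [Nat.cast_add_one, add_sub_cancel_right]
  rw [hm]
  exact hRS.RRate_eq hn hℓ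

/-- recurrence quantifiers for threshold ε = 2^{-h} in terms of those of
the symbolic recurrence plot (ε₀ = 1/2), with θ = ((n+h−1)² − (n+h−1))/(n² − n). -/
theorem quantifiers_general_eps
    (x : ℕ → Bool) (ℓ n h : ℕ) (hℓ : 1 ≤ ℓ) (hn : 2 ≤ n) (hh : 1 ≤ h) :
    Nlines seqDist shift x n ((2:ℝ) ^ (-(h:ℤ))) ℓ
      = Nlines seqDist shift x (n + h - 1) (1/2 : ℝ) (ℓ + h - 1) ∧
    Pline seqDist shift x n ((2:ℝ) ^ (-(h:ℤ))) ℓ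
      = (((n + h - 1 : ℕ) : ℝ) ^ 2 - ((n + h - 1 : ℕ) : ℝ)) / ((n : ℝ) ^ 2 - (n : ℝ))
        * Pline seqDist shift x (n + h - 1) (1/2 : ℝ) (ℓ + h - 1) ∧
    PlineGe seqDist shift x n ((2:ℝ) ^ (-(h:ℤ))) ℓ
      = (((n + h - 1 : ℕ) : ℝ) ^ 2 - ((n + h - 1 : ℕ) : ℝ)) / ((n : ℝ) ^ 2 - (n : ℝ))
        * PlineGe seqDist shift x (n + h - 1) (1/2 : ℝ) (ℓ + h - 1) ∧
    RRate seqDist shift x n ((2:ℝ) ^ (-(h:ℤ))) ℓ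
      = (((n + h - 1 : ℕ) : ℝ) ^ 2 - ((n + h - 1 : ℕ) : ℝ)) / ((n : ℝ) ^ 2 - (n : ℝ))
        * (RRate seqDist shift x (n + h - 1) (1/2 : ℝ) (ℓ + h - 1)
            - ((h : ℝ) - 1) * PlineGe seqDist shift x (n + h - 1) (1/2 : ℝ) (ℓ + h - 1)) :=
  quantifiers_general_eps_general x ℓ n h hℓ hn hh
end

section
/- Let ζ be a primitive aperiodic binary substitution of constant length q ≥ 2 with ζ(0) starting with 0 and x = ζ^∞(0). Then the series Σ_{ℓ ∈ L} 1/ℓ converges, where L = {ℓ ∈ ℕ : K_ℓ ≠ ∅} is the set of lengths ℓ for which there exists an inner line of length exactly ℓ in the infinite symbolic recurrence plot RP(x,∞,ε₀). -/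
open Filter Topology MeasureTheory

open RQA

/-!
Write `P n` for the number of factors of length `n` of `x`. If arbitrarily long factors occurred at
positions that are incongruent modulo `q`, then by uniform recurrence every factor of length `q * m`
would occur at a position not divisible by `q`, hence would be determined by one of `q - 1` nonzero
residues and a factor of length `m + 1`. Thus `P (q * m) ≤ (q - 1) * P (m + 1)`, so `P` grows
sublinearly, and `x` is eventually periodic by Morse–Hedlund.

An inner line of length `l` lies between two consecutive mismatches, at distance `l + 1`, on a
diagonal. In an eventually periodic sequence these distances are bounded. Otherwise the ends of a
long line are aligned with the blocks of the substitution. On a binary alphabet the two blocks first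
and last differ at fixed offsets `r₀` and `r₁`, so the preimage of a line of length `l` is a line of
length `l'` with `l = q * l' + c`, where `c = q + r₀ - r₁ - 1`. All lengths therefore lie on the
orbits of finitely many short ones under `l ↦ q * l + c`, and along each orbit they grow
geometrically.
-/

namespace RQA

/-! ### Factors and complexity -/

section Factor

variable {α : Type*}

/-- The factor (subword) of length `n` at position `s` of the sequence `x`, as a function on
`Fin n` so that factors of a given length over a finite alphabet form a finite type. -/
def factor (x : ℕ → α) (n s : ℕ) : Fin n → α := fun t => x (s + t)

/-- The factor complexity of `x`: the number of distinct factors of length `n`. Over an infinite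
alphabet `Set.ncard` may take its junk value `0`. -/
noncomputable def complexity (x : ℕ → α) (n : ℕ) : ℕ := (Set.range (factor x n)).ncard

/-- `x` is eventually periodic: periodic with some positive period after a finite prefix. -/
def EventuallyPeriodic (x : ℕ → α) : Prop :=
  ∃ i p, 0 < p ∧ ∀ m, i ≤ m → x (m + p) = x m

variable {x : ℕ → α} {n s s' : ℕ}

theorem factor_eq_factor_iff : factor x n s = factor x n s' ↔ ∀ t < n, x (s + t) = x (s' + t) := by
  simp only [funext_iff, factor, Fin.forall_iff]

theorem factor_add_eq_of_factor_eq {r l : ℕ} (h : factor x n s = factor x n s') (hrl : r + l ≤ n) :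
    factor x l (s + r) = factor x l (s' + r) := by
  rw [factor_eq_factor_iff] at h ⊢
  intro t ht
  simpa only [add_assoc] using h (r + t) (by omega)

theorem exists_le_factor_eq [Finite α] (x : ℕ → α) (n : ℕ) :
    ∃ M, ∀ p, ∃ s ≤ M, factor x n s = factor x n p := by
  obtain ⟨M, hM⟩ := (Set.finite_range (Set.rangeSplitting (factor x n))).bddAbove
  exact ⟨M, fun p => ⟨_, hM ⟨⟨_, p, rfl⟩, rfl⟩, Set.apply_rangeSplitting (factor x n) ⟨_, p, rfl⟩⟩⟩

theorem eventuallyPeriodic_of_factor_determines_next [Finite α]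
    (hnext : ∀ s s', factor x n s = factor x n s' → x (s + n) = x (s' + n)) :
    EventuallyPeriodic x := by
  obtain ⟨i, j, hij, hfac⟩ : ∃ i j, i < j ∧ factor x n i = factor x n j := by
    obtain ⟨i, j, hne, hfac⟩ := Finite.exists_ne_map_eq_of_infinite (factor x n)
    rcases hne.lt_or_gt with hij | hji
    exacts [⟨i, j, hij, hfac⟩, ⟨j, i, hji, hfac.symm⟩]
  have hshift (m : ℕ) : factor x n (i + m) = factor x n (j + m) := by
    induction m with
    | zero => exact hfac
    | succ m ih =>
      have hlast := hnext _ _ ih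
      rw [factor_eq_factor_iff] at ih ⊢
      intro t ht
      rcases (show t + 1 ≤ n from ht).eq_or_lt with rfl | ht'
      · simpa only [add_assoc, add_comm, add_left_comm] using hlast
      · simpa only [add_assoc, add_comm, add_left_comm] using ih (t + 1) ht'
  refine ⟨i + n, j - i, by omega, fun m hm => ?_⟩
  obtain ⟨d, rfl⟩ := Nat.exists_eq_add_of_le hm
  convert (hnext _ _ (hshift d)).symm using 2 <;> omega

theorem complexity_lt_complexity_succ [Finite α] (hx : ¬ EventuallyPeriodic x) (n : ℕ) :
    complexity x n < complexity x (n + 1) := by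
  let truncate : (Fin (n + 1) → α) → Fin n → α := Fin.init
  have himage : truncate '' Set.range (factor x (n + 1)) = Set.range (factor x n) := by
    rw [← Set.range_comp]
    rfl
  have hle : complexity x n ≤ complexity x (n + 1) := by
    rw [complexity, ← himage]
    exact Set.ncard_image_le (Set.toFinite _)
  refine hle.lt_of_ne fun heq => hx ?_
  have hinj : Set.InjOn truncate (Set.range (factor x (n + 1))) :=
    Set.injOn_of_ncard_image_eq (by rwa [himage]) (Set.toFinite _)
  exact eventuallyPeriodic_of_factor_determines_next fun s s' h =>
    congrFun (hinj ⟨s, rfl⟩ ⟨s', rfl⟩ h) (Fin.last n)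

theorem le_complexity [Finite α] (hx : ¬ EventuallyPeriodic x) (n : ℕ) : n ≤ complexity x n :=
  (strictMono_nat_of_lt_succ (complexity_lt_complexity_succ hx)).le_apply

end Factor

theorem exists_mul_pow_lt_pow {b q : ℕ} (hbq : b < q) (A : ℕ) : ∃ k, A * b ^ k < q ^ k := by
  have hlittle := isLittleO_pow_pow_of_lt_left (Nat.cast_nonneg b) (Nat.cast_lt (α := ℝ).2 hbq)
  obtain ⟨k, hk⟩ := (hlittle.def (c := 1 / (A + 1)) (by positivity)).exists
  refine ⟨k, ?_⟩
  have hq : (0 : ℝ) < (q : ℝ) ^ k := pow_pos (Nat.cast_pos.2 (by omega)) k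
  rw [Real.norm_of_nonneg (by positivity), Real.norm_of_nonneg hq.le, one_div_mul_eq_div,
    le_div_iff₀ (by positivity)] at hk
  have hreal : (A : ℝ) * b ^ k < q ^ k := by
    rcases (pow_nonneg (Nat.cast_nonneg (α := ℝ) b) k).eq_or_lt with hb | hb
    · rwa [← hb, mul_zero]
    · linarith
  exact_mod_cast hreal

theorem exists_mul_apply_succ_lt_apply_mul {f : ℕ → ℕ} {b q : ℕ} (hbq : b < q) (hq : 2 ≤ q)
    (hf : ∀ n, n ≤ f n) : ∃ m, b * f (m + 1) < f (q * m) := by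
  by_contra! hle
  have hiterate (k : ℕ) : ∃ m, q ^ k + 1 ≤ m ∧ f (m + 1) ≤ b ^ k * f 3 := by
    induction k with
    | zero => exact ⟨2, by simp⟩
    | succ k ih =>
      obtain ⟨m, hm, hfm⟩ := ih
      have hlt : q ^ (k + 1) + 2 ≤ q * m := by
        calc q ^ (k + 1) + 2 ≤ q * (q ^ k + 1) := by rw [pow_succ', mul_add]; omega
          _ ≤ q * m := Nat.mul_le_mul_left q hm
      refine ⟨q * m - 1, by omega, ?_⟩
      calc f (q * m - 1 + 1) = f (q * m) := by rw [Nat.sub_add_cancel (by omega)]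
        _ ≤ b * f (m + 1) := hle m
        _ ≤ b * (b ^ k * f 3) := Nat.mul_le_mul_left b hfm
        _ = b ^ (k + 1) * f 3 := by ring
  obtain ⟨k, hk⟩ := exists_mul_pow_lt_pow hbq (f 3)
  obtain ⟨m, hm, hfm⟩ := hiterate k
  have hlow := hf (m + 1)
  rw [mul_comm] at hfm
  omega

/-! ### Constant-length fixed points and recognizability -/

section BlockDetermined

variable {α : Type*}

/-- `x` is a fixed point of some substitution of constant length `q`, expressed without the
substitution: the letter `x m` determines the block of `x` on `[q * m, q * m + q)`. -/
def BlockDetermined (q : ℕ) (x : ℕ → α) : Prop :=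
  ∀ ⦃m n⦄, x m = x n → ∀ r < q, x (q * m + r) = x (q * n + r)

/-- `x` is uniformly recurrent: for each `n` there is a bound `R` such that every factor of length
`n` occurs in every window of `R + 1` consecutive positions. -/
def UniformlyRecurrent (x : ℕ → α) : Prop :=
  ∀ n, ∃ R, ∀ i p, ∃ s ∈ Set.Icc i (i + R), factor x n s = factor x n p

/-- `x` is recognizable with respect to blocks of length `q`: sufficiently long factors determine
their position modulo `q`. -/
def Recognizable (q : ℕ) (x : ℕ → α) : Prop :=
  ∃ N, ∀ i j, factor x N i = factor x N j → i ≡ j [MOD q]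

variable {x : ℕ → α} {q : ℕ}

theorem BlockDetermined.factor_eq (hx : BlockDetermined q x) {n s s' r l : ℕ}
    (h : factor x n s = factor x n s') (hrl : r + l ≤ q * n) :
    factor x l (q * s + r) = factor x l (q * s' + r) := by
  rw [factor_eq_factor_iff] at h ⊢
  intro t ht
  have hrt : r + t < q * n := by omega
  have hblock : (r + t) / q < n := Nat.div_lt_of_lt_mul hrt
  have hoffset : (r + t) % q < q := Nat.mod_lt _ (Nat.pos_of_mul_pos_right (by omega : 0 < q * n))
  have hsplit (s : ℕ) : q * s + r + t = q * (s + (r + t) / q) + (r + t) % q := by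
    rw [mul_add, add_assoc, add_assoc, Nat.div_add_mod]
  rw [hsplit, hsplit]
  exact hx (h _ hblock) _ hoffset

theorem BlockDetermined.pow (hx : BlockDetermined q x) (k : ℕ) : BlockDetermined (q ^ k) x := by
  induction k with
  | zero =>
    intro m n h r hr
    simpa [Nat.lt_one_iff.1 (pow_zero q ▸ hr)] using h
  | succ k ih =>
    intro m n h r hr
    rw [pow_succ'] at hr
    have hblock : factor x (q ^ k) (q ^ k * m) = factor x (q ^ k) (q ^ k * n) :=
      factor_eq_factor_iff.2 (ih h)
    have himage := hx.factor_eq (r := 0) (l := q * q ^ k) hblock (by simp)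
    simpa only [add_zero, ← mul_assoc, ← pow_succ'] using
      factor_eq_factor_iff.1 himage r hr

theorem BlockDetermined.uniformlyRecurrent [Finite α] (hx : BlockDetermined q x) (hq : 2 ≤ q)
    {R : ℕ} (hR : ∀ i p, ∃ s ∈ Set.Icc i (i + R), x s = x p) : UniformlyRecurrent x := by
  intro n
  obtain ⟨M, hM⟩ := exists_le_factor_eq x n
  have hlarge : M + n < q ^ (M + n) := Nat.lt_pow_self (by omega)
  have hblocks := hx.pow (M + n)
  generalize q ^ (M + n) = Q at hlarge hblocks
  refine ⟨Q * (R + 1) + M, fun i p => ?_⟩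
  obtain ⟨s, hs, hsp⟩ := hM p
  obtain ⟨b, ⟨hib, hbi⟩, hb⟩ := hR (i / Q + 1) 0
  have hi_lt : i < Q * (i / Q + 1) := Nat.lt_mul_div_succ i (by omega)
  have hlower : Q * (i / Q + 1) ≤ Q * b := Nat.mul_le_mul_left Q hib
  have hupper : Q * b ≤ Q * (i / Q) + Q * (R + 1) := by
    rw [← mul_add]
    exact Nat.mul_le_mul_left Q (by omega)
  have hi_ge := Nat.mul_div_le i Q
  refine ⟨Q * b + s, ⟨by omega, by omega⟩, ?_⟩
  have hletter : factor x 1 b = factor x 1 0 :=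
    factor_eq_factor_iff.2 fun t ht => by simpa [Nat.lt_one_iff.1 ht] using hb
  calc factor x n (Q * b + s) = factor x n (Q * 0 + s) := hblocks.factor_eq hletter (by omega)
    _ = factor x n p := by simpa using hsp

theorem BlockDetermined.exists_not_dvd_factor_eq (hx : BlockDetermined q x) (hq : 0 < q)
    (hrec : UniformlyRecurrent x) (hnot : ¬ Recognizable q x) (n p : ℕ) :
    ∃ s, ¬ q ∣ s ∧ factor x n s = factor x n p := by
  by_cases hp : q ∣ p
  swap
  · exact ⟨p, hp, rfl⟩
  obtain ⟨a, rfl⟩ := hp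
  obtain ⟨R, hR⟩ := hrec n
  simp only [Recognizable, not_exists, not_forall] at hnot
  obtain ⟨i, j, hij, hmod⟩ := hnot (q * (R + 1) + n)
  obtain ⟨b, ⟨hib, hbi⟩, hb⟩ := hR (i / q + 1) a
  have hi_lt : i < q * (i / q + 1) := Nat.lt_mul_div_succ i hq
  have hlower : q * (i / q + 1) ≤ q * b := Nat.mul_le_mul_left q hib
  have hupper : q * b ≤ q * (i / q) + q * (R + 1) := by
    rw [← mul_add]
    exact Nat.mul_le_mul_left q (by omega)
  have hi_ge := Nat.mul_div_le i q
  obtain ⟨d, hd⟩ := Nat.exists_eq_add_of_le (show i ≤ q * b by omega)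
  refine ⟨j + d, fun hdvd => hmod ?_, ?_⟩
  · refine Nat.ModEq.add_right_cancel' d ((Nat.modEq_zero_iff_dvd.2 ?_).trans
      (Nat.modEq_zero_iff_dvd.2 hdvd).symm)
    exact hd ▸ dvd_mul_right q b
  · calc factor x n (j + d) = factor x n (i + d) :=
          (factor_add_eq_of_factor_eq hij (by omega)).symm
      _ = factor x n (q * b + 0) := by rw [hd, add_zero]
      _ = factor x n (q * a + 0) :=
          hx.factor_eq hb (by rw [zero_add]; exact Nat.le_mul_of_pos_left n hq)

theorem BlockDetermined.complexity_mul_le [Finite α] (hx : BlockDetermined q x) (hq : 0 < q)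
    {m : ℕ} (hocc : ∀ p, ∃ s, ¬ q ∣ s ∧ factor x (q * m) s = factor x (q * m) p) :
    complexity x (q * m) ≤ (q - 1) * complexity x (m + 1) := by
  choose s hs hfac using hocc
  let code (p : ℕ) : ℕ × (Fin (m + 1) → α) := (s p % q, factor x (m + 1) (s p / q))
  have hcode : Function.FactorsThrough (factor x (q * m)) code := by
    intro p p' h
    obtain ⟨hres, hblocks⟩ := Prod.mk.inj h
    have hlt := Nat.mod_lt (s p) hq
    rw [← hfac p, ← hfac p', ← Nat.div_add_mod (s p) q, ← Nat.div_add_mod (s p') q, ← hres]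
    exact hx.factor_eq hblocks (by rw [mul_add]; omega)
  have hrange : Set.range code ⊆ Set.Ico 1 q ×ˢ Set.range (factor x (m + 1)) := by
    rintro _ ⟨p, rfl⟩
    have hpos : s p % q ≠ 0 := fun h => hs p (Nat.dvd_of_mod_eq_zero h)
    exact ⟨⟨Nat.one_le_iff_ne_zero.2 hpos, Nat.mod_lt _ hq⟩, ⟨_, rfl⟩⟩
  have : Nonempty α := ⟨x 0⟩
  obtain ⟨decode, hdecode⟩ := (Function.factorsThrough_iff _).1 hcode
  calc complexity x (q * m) = (decode '' Set.range code).ncard := by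
        rw [← Set.range_comp, ← hdecode, complexity]
    _ ≤ (Set.range code).ncard := Set.ncard_image_le ((Set.toFinite _).subset hrange)
    _ ≤ (Set.Ico 1 q ×ˢ Set.range (factor x (m + 1))).ncard :=
        Set.ncard_le_ncard hrange (Set.toFinite _)
    _ = (q - 1) * complexity x (m + 1) := by
        rw [Set.ncard_prod, ← Finset.coe_Ico, Set.ncard_coe_finset, Nat.card_Ico, complexity]

theorem BlockDetermined.recognizable [Finite α] (hx : BlockDetermined q x) (hq : 2 ≤ q)
    (hrec : UniformlyRecurrent x) (hper : ¬ EventuallyPeriodic x) : Recognizable q x := by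
  by_contra hnot
  obtain ⟨m, hm⟩ := exists_mul_apply_succ_lt_apply_mul (show q - 1 < q by omega) hq
    (le_complexity hper)
  exact hm.not_ge <| hx.complexity_mul_le (by omega)
    (hx.exists_not_dvd_factor_eq (by omega) hrec hnot (q * m))

end BlockDetermined

/-! ### Mismatch gaps -/

section MismatchGap

variable {α : Type*}

/-- Two consecutive mismatches at distance `g` on the diagonal through `(i, j)`. An inner line of
length `l` starting at `(i + 1, j + 1)` is such a gap with `g = l + 1`. -/
def IsMismatchGap (x : ℕ → α) (i j g : ℕ) : Prop :=
  x i ≠ x j ∧ x (i + g) ≠ x (j + g) ∧ ∀ t, 0 < t → t < g → x (i + t) = x (j + t)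

/-- The blocks of length `q` of any two distinct letters first differ at offset `r₀` and last differ
at offset `r₁`, the offsets not depending on the letters. -/
def HasMismatchOffsets (q r₀ r₁ : ℕ) (x : ℕ → α) : Prop :=
  ∀ m n, x m ≠ x n → IsLeast {r | r < q ∧ x (q * m + r) ≠ x (q * n + r)} r₀ ∧
    IsGreatest {r | r < q ∧ x (q * m + r) ≠ x (q * n + r)} r₁

variable {x : ℕ → α} {q r₀ r₁ i j g : ℕ}

theorem IsMismatchGap.le_add_of_eventually_periodic {k p : ℕ} (hgap : IsMismatchGap x i j g)
    (hp : 0 < p) (hper : ∀ m, k ≤ m → x (m + p) = x m) : g ≤ k + p := by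
  obtain ⟨-, hlast, hinner⟩ := hgap
  by_contra! hg
  apply hlast
  obtain ⟨d, rfl⟩ := Nat.exists_eq_add_of_le (show p ≤ g by omega)
  rw [add_comm p, ← add_assoc, ← add_assoc, hper _ (by omega), hper _ (by omega)]
  exact hinner d (by omega) (by omega)

theorem BlockDetermined.exists_hasMismatchOffsets {x : ℕ → Bool} (hx : BlockDetermined q x)
    (hq : 0 < q) (hper : ¬ EventuallyPeriodic x) : ∃ r₀ r₁, HasMismatchOffsets q r₀ r₁ x := by
  let offsets : Set ℕ := {r | r < q ∧ ∃ m n, x (q * m + r) ≠ x (q * n + r)}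
  have hoffsets (m n : ℕ) (hmn : x m ≠ x n) :
      {r | r < q ∧ x (q * m + r) ≠ x (q * n + r)} = offsets := by
    refine Set.Subset.antisymm (fun r ⟨hr, h⟩ => ⟨hr, m, n, h⟩) ?_
    rintro r ⟨hr, m', n', hne⟩
    refine ⟨hr, fun heq => hne ?_⟩
    have hblock (k : ℕ) : x (q * k + r) = x (q * n + r) := by
      rcases Bool.eq_or_eq_not (x k) (x n) with hk | hk
      · exact hx hk r hr
      · rw [← heq]
        exact hx (hk.trans (Bool.eq_not_of_ne hmn).symm) r hr
    rw [hblock m', hblock n']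
  have hnonempty : offsets.Nonempty := by
    by_contra hempty
    refine hper ⟨0, q, hq, fun i _ => ?_⟩
    by_contra hne
    refine hempty ⟨i % q, Nat.mod_lt i hq, i / q + 1, i / q, ?_⟩
    rwa [mul_add, mul_one, add_right_comm, Nat.div_add_mod]
  obtain ⟨r₀, hr₀⟩ := (OrderBot.bddBelow offsets).exists_isLeast_of_nonempty hnonempty
  obtain ⟨r₁, hr₁⟩ := (show BddAbove offsets from
    ⟨q, fun _ hr => hr.1.le⟩).exists_isGreatest_of_nonempty hnonempty
  exact ⟨r₀, r₁, fun m n hmn => by rw [hoffsets m n hmn]; exact ⟨hr₀, hr₁⟩⟩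

theorem BlockDetermined.apply_div_ne_apply_div (hx : BlockDetermined q x) (hq : 0 < q)
    (hmod : i ≡ j [MOD q]) (hij : x i ≠ x j) : x (i / q) ≠ x (j / q) := by
  intro h
  apply hij
  have hblock := hx h _ (Nat.mod_lt i hq)
  rwa [Nat.div_add_mod, hmod, Nat.div_add_mod] at hblock

theorem IsMismatchGap.mod_eq_last (hgap : IsMismatchGap x i j g) (hx : BlockDetermined q x)
    (hoff : HasMismatchOffsets q r₀ r₁ x) (hmod : i ≡ j [MOD q]) (hq : 0 < q) (hg : q ≤ g) :
    i % q = r₁ := by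
  obtain ⟨hfirst, -, hinner⟩ := hgap
  obtain ⟨-, ⟨hr₁, hne⟩, hmax⟩ := hoff _ _ (hx.apply_div_ne_apply_div hq hmod hfirst)
  have hi := Nat.div_add_mod i q
  have hj := Nat.div_add_mod j q
  rw [← hmod] at hj
  have hle : i % q ≤ r₁ := hmax ⟨Nat.mod_lt i hq, by rwa [hi, hj]⟩
  by_contra hlt
  refine hne ?_
  convert hinner (r₁ - i % q) (by omega) (by omega) using 2 <;> omega

theorem IsMismatchGap.add_mod_eq_first (hgap : IsMismatchGap x i j g) (hx : BlockDetermined q x)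
    (hoff : HasMismatchOffsets q r₀ r₁ x) (hmod : i ≡ j [MOD q]) (hq : 0 < q) (hg : q ≤ g) :
    (i + g) % q = r₀ := by
  obtain ⟨-, hlast, hinner⟩ := hgap
  have hmod_end : i + g ≡ j + g [MOD q] := hmod.add_right g
  obtain ⟨⟨⟨hr₀, hne⟩, hmin⟩, -⟩ := hoff _ _ (hx.apply_div_ne_apply_div hq hmod_end hlast)
  have hi := Nat.div_add_mod (i + g) q
  have hj := Nat.div_add_mod (j + g) q
  have hlt_q := Nat.mod_lt (i + g) hq
  rw [← hmod_end] at hj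
  have hle : r₀ ≤ (i + g) % q := hmin ⟨hlt_q, by rwa [hi, hj]⟩
  by_contra hlt
  refine hne ?_
  convert hinner (g - ((i + g) % q - r₀)) (by omega) (by omega) using 2 <;> omega

theorem IsMismatchGap.exists_preimage (hgap : IsMismatchGap x i j g) (hx : BlockDetermined q x)
    (hoff : HasMismatchOffsets q r₀ r₁ x) (hmod : i ≡ j [MOD q]) (hq : 0 < q) (hg : q ≤ g) :
    ∃ i' j' g', IsMismatchGap x i' j' g' ∧ g + r₁ = q * g' + r₀ := by
  have hr₁ := hgap.mod_eq_last hx hoff hmod hq hg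
  have hr₀ := hgap.add_mod_eq_first hx hoff hmod hq hg
  obtain ⟨hfirst, hlast, hinner⟩ := hgap
  have hmod_end : i + g ≡ j + g [MOD q] := hmod.add_right g
  have hne := hx.apply_div_ne_apply_div hq hmod hfirst
  have hne_end := hx.apply_div_ne_apply_div hq hmod_end hlast
  have hi := Nat.div_add_mod i q
  have hj := Nat.div_add_mod j q
  have hi_end := Nat.div_add_mod (i + g) q
  have hj_end := Nat.div_add_mod (j + g) q
  have hr₁_lt := Nat.mod_lt i hq
  rw [← hmod] at hj
  rw [← hmod_end] at hj_end
  rw [hr₁] at hi hj hr₁_lt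
  rw [hr₀] at hi_end hj_end
  obtain ⟨g', hg'⟩ := Nat.exists_eq_add_of_le (Nat.div_le_div_right (c := q) (Nat.le_add_right i g))
  have hlen : g + r₁ = q * g' + r₀ := by
    rw [hg', mul_add] at hi_end
    omega
  have hj_div : (j + g) / q = j / q + g' := by
    apply Nat.eq_of_mul_eq_mul_left hq
    rw [mul_add]
    omega
  rw [hg', hj_div] at hne_end
  refine ⟨i / q, j / q, g', ⟨hne, hne_end, fun t ht htg => ?_⟩, hlen⟩
  by_contra hne_t
  have hlower : q * 1 ≤ q * t := Nat.mul_le_mul_left q ht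
  have hupper : q * (t + 1) ≤ q * g' := Nat.mul_le_mul_left q htg
  refine (hoff _ _ hne_t).1.1.2 ?_
  rw [mul_add] at hupper
  convert hinner (q * t + r₀ - r₁) (by omega) (by omega) using 2 <;> rw [mul_add] <;> omega

end MismatchGap

/-! ### Lengths of inner lines -/

theorem Kset_nonempty_iff {x : ℕ → Bool} {l : ℕ} :
    (Kset x l).Nonempty ↔ 0 < l ∧ ∃ i j, IsMismatchGap x i j (l + 1) := by
  constructor
  · rintro ⟨⟨i, j⟩, hi, hj, hl, -, hinner, hbefore, hafter⟩
    obtain ⟨i, rfl⟩ := Nat.exists_eq_add_of_le' hi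
    obtain ⟨j, rfl⟩ := Nat.exists_eq_add_of_le' hj
    refine ⟨hl, i, j, hbefore i.succ_pos j.succ_pos, ?_, fun t ht htl => ?_⟩
    · simpa only [add_assoc, add_comm, add_left_comm] using hafter
    · obtain ⟨t, rfl⟩ := Nat.exists_eq_add_of_le' ht
      simpa only [add_assoc, add_comm, add_left_comm] using hinner t (by omega)
  · rintro ⟨hl, i, j, hfirst, hlast, hinner⟩
    refine ⟨(i + 1, j + 1), i.succ_pos, j.succ_pos, hl, ?_, fun t ht => ?_, fun _ _ => hfirst, ?_⟩
    · exact fun h => hfirst (congrArg x (Nat.succ_injective h))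
    · simpa only [add_assoc, add_comm, add_left_comm] using hinner (t + 1) t.succ_pos (by omega)
    · simpa only [add_assoc, add_comm, add_left_comm] using hlast

theorem finite_Kset_nonempty_of_eventuallyPeriodic {x : ℕ → Bool} (hx : EventuallyPeriodic x) :
    {l | (Kset x l).Nonempty}.Finite := by
  obtain ⟨k, p, hp, hper⟩ := hx
  refine (Set.finite_Iio (k + p)).subset fun l hl => ?_
  obtain ⟨-, i, j, hgap⟩ := Kset_nonempty_iff.1 hl
  exact hgap.le_add_of_eventually_periodic hp hper

theorem BlockDetermined.exists_forall_Kset_nonempty_eq_mul_add {x : ℕ → Bool} {q : ℕ}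
    (hx : BlockDetermined q x) (hq : 0 < q) (hrec : Recognizable q x)
    (hper : ¬ EventuallyPeriodic x) :
    ∃ c N, ∀ l, (Kset x l).Nonempty → N ≤ l → ∃ l', (Kset x l').Nonempty ∧ q * l' + c = l := by
  obtain ⟨N, hN⟩ := hrec
  obtain ⟨r₀, r₁, hoff⟩ := hx.exists_hasMismatchOffsets hq hper
  refine ⟨q + r₀ - r₁ - 1, N + q, fun l hl hNl => ?_⟩
  obtain ⟨-, i, j, hgap⟩ := Kset_nonempty_iff.1 hl
  have hmod : i ≡ j [MOD q] := by
    refine Nat.ModEq.add_right_cancel' 1 (hN _ _ (factor_eq_factor_iff.2 fun t ht => ?_))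
    simpa only [add_assoc] using hgap.2.2 (1 + t) (by omega) (by omega)
  obtain ⟨i', j', g', hgap', hlen⟩ := hgap.exists_preimage hx hoff hmod hq (by omega)
  obtain ⟨hleast, ⟨hr₁, hne⟩, -⟩ := hoff _ _ hgap'.1
  have hr₀r₁ : r₀ ≤ r₁ := hleast.2 ⟨hr₁, hne⟩
  have hg' : 1 < g' := by
    by_contra! hle
    have := Nat.mul_le_mul_left q hle
    omega
  obtain ⟨l', rfl⟩ := Nat.exists_eq_add_of_le' hg'.le
  refine ⟨l', Kset_nonempty_iff.2 ⟨by omega, i', j', hgap'⟩, ?_⟩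
  rw [mul_add] at hlen
  omega

theorem exists_iterate_eq_of_forall_exists_preimage {T : ℕ → ℕ} {L : Set ℕ} {N : ℕ}
    (hT : ∀ l ∈ L, l < T l) (hL : ∀ l ∈ L, N ≤ l → ∃ l' ∈ L, T l' = l) {l : ℕ} (hl : l ∈ L) :
    ∃ s ∈ L, s < N ∧ ∃ k, T^[k] s = l := by
  induction l using Nat.strong_induction_on with
  | _ l ih =>
    rcases lt_or_ge l N with hlN | hNl
    · exact ⟨l, hl, hlN, 0, rfl⟩
    · obtain ⟨l', hl', rfl⟩ := hL l hl hNl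
      obtain ⟨s, hs, hsN, k, rfl⟩ := ih l' (hT l' hl') hl'
      exact ⟨s, hs, hsN, k + 1, Function.iterate_succ_apply' T k s⟩

theorem two_pow_mul_le_iterate {T : ℕ → ℕ} (hT : ∀ l, 2 * l ≤ T l) (k s : ℕ) :
    2 ^ k * s ≤ T^[k] s := by
  induction k with
  | zero => simp
  | succ k ih =>
    rw [Function.iterate_succ_apply', pow_succ', mul_assoc]
    exact (Nat.mul_le_mul_left 2 ih).trans (hT _)

theorem summable_indicator_one_div_of_forall_exists_preimage {T : ℕ → ℕ} {L : Set ℕ} {N : ℕ}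
    (hT : ∀ l, 2 * l ≤ T l) (hpos : ∀ l ∈ L, 0 < l)
    (hL : ∀ l ∈ L, N ≤ l → ∃ l' ∈ L, T l' = l) :
    Summable (L.indicator fun l : ℕ => 1 / (l : ℝ)) := by
  have hT_gt (l : ℕ) (hl : l ∈ L) : l < T l := by linarith [hT l, hpos l hl]
  have horbit (l : L) := exists_iterate_eq_of_forall_exists_preimage hT_gt hL l.2
  choose s hs hsN k hk using horbit
  let address (l : L) : Fin N × ℕ := (⟨s l, hsN l⟩, k l)
  have haddress : Function.Injective address := by
    intro l l' h
    simp only [address, Prod.mk.injEq, Fin.mk.injEq] at h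
    rw [Subtype.ext_iff, ← hk l, ← hk l', h.1, h.2]
  have hgeometric : Summable fun a : Fin N × ℕ => (1 / 2 : ℝ) ^ a.2 := by
    simpa using (Summable.of_finite (f := fun _ : Fin N => (1 : ℝ))).mul_of_nonneg
      summable_geometric_two (fun _ => zero_le_one) (fun _ => by positivity)
  rw [← summable_subtype_iff_indicator]
  refine Summable.of_nonneg_of_le (fun l => one_div_nonneg.2 (Nat.cast_nonneg _)) (fun l => ?_)
    (hgeometric.comp_injective haddress)
  have hgrowth : 2 ^ k l ≤ (l : ℕ) :=
    calc 2 ^ k l ≤ 2 ^ k l * s l := Nat.le_mul_of_pos_right _ (hpos _ (hs l))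
      _ ≤ l := by simpa only [hk l] using two_pow_mul_le_iterate hT (k l) (s l)
  simp only [Function.comp_apply, one_div_pow, address]
  exact one_div_le_one_div_of_le (by positivity) (by exact_mod_cast hgrowth)

/-! ### Fixed points of substitutions -/

section Substitution

variable {ζ : Bool → List Bool} {q : ℕ} {x : ℕ → Bool}

theorem apply_mul_add_of_substSeq_eq (hxfix : substSeq ζ q x = x) (m : ℕ) {r : ℕ} (hr : r < q) :
    x (q * m + r) = (ζ (x m)).getD r false := by
  conv_lhs => rw [← hxfix]
  rw [substSeq, Nat.mul_add_div (by omega), Nat.mul_add_mod, Nat.mod_eq_of_lt hr,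
    Nat.div_eq_of_lt hr, add_zero]

theorem blockDetermined_of_substSeq_eq (hxfix : substSeq ζ q x = x) : BlockDetermined q x := by
  intro m n h r hr
  rw [apply_mul_add_of_substSeq_eq hxfix m hr, apply_mul_add_of_substSeq_eq hxfix n hr, h]

theorem substWord_ofFn_factor (hζ : IsConstLenSubst ζ q) (hxfix : substSeq ζ q x = x) (n s : ℕ) :
    substWord ζ (List.ofFn (factor x n s)) = List.ofFn (factor x (q * n) (q * s)) := by
  have hblock (m : ℕ) : ζ (x m) = List.ofFn fun r : Fin q => x (q * m + r) := by
    refine List.ext_getElem (by simp [hζ.2]) fun r hr hr' => ?_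
    rw [List.getElem_ofFn, apply_mul_add_of_substSeq_eq hxfix m (hζ.2 (x m) ▸ hr),
      List.getD_eq_getElem _ _ hr]
  have hsubst (w : List Bool) : substWord ζ w = (w.map ζ).flatten := by
    simp [substWord]
  rw [hsubst, List.map_ofFn, List.ofFn_mul']
  congr 2
  funext t
  simp only [Function.comp_apply, factor, hblock, mul_add, add_assoc]

theorem substWord_iterate_singleton (hζ : IsConstLenSubst ζ q) (hxfix : substSeq ζ q x = x)
    (k s : ℕ) : (substWord ζ)^[k] [x s] = List.ofFn (factor x (q ^ k) (q ^ k * s)) := by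
  induction k with
  | zero => simp [factor]
  | succ k ih =>
    rw [Function.iterate_succ_apply', ih, substWord_ofFn_factor hζ hxfix, pow_succ', mul_assoc]

theorem exists_pow_block_mem_of_isPrimitive (hζ : IsConstLenSubst ζ q) (hprim : IsPrimitive ζ)
    (hxfix : substSeq ζ q x = x) : ∃ k, ∀ m b, ∃ r < q ^ k, x (q ^ k * m + r) = b := by
  obtain ⟨k, -, hk⟩ := hprim
  refine ⟨k, fun m b => ?_⟩
  have hmem := hk (x m) b
  rw [substWord_iterate_singleton hζ hxfix, List.mem_ofFn] at hmem
  obtain ⟨r, hr⟩ := hmem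
  exact ⟨r, r.2, hr⟩

theorem uniformlyRecurrent_of_isPrimitive (hζ : IsConstLenSubst ζ q) (hprim : IsPrimitive ζ)
    (hxfix : substSeq ζ q x = x) : UniformlyRecurrent x := by
  obtain ⟨k, hk⟩ := exists_pow_block_mem_of_isPrimitive hζ hprim hxfix
  refine (blockDetermined_of_substSeq_eq hxfix).uniformlyRecurrent hζ.1 (R := 2 * q ^ k)
    fun i p => ?_
  obtain ⟨r, hr, hxr⟩ := hk (i / q ^ k + 1) (x p)
  have hi_lt : i < q ^ k * (i / q ^ k + 1) := Nat.lt_mul_div_succ i (by omega)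
  have hi_ge := Nat.mul_div_le i (q ^ k)
  refine ⟨_, ⟨by omega, ?_⟩, hxr⟩
  rw [mul_add]
  omega

end Substitution

end RQA

theorem summable_inv_line_lengths_general {x : ℕ → Bool} {q : ℕ} (hq : 2 ≤ q)
    (hx : BlockDetermined q x) (hrec : UniformlyRecurrent x) :
    Summable (Set.indicator {ℓ : ℕ | (Kset x ℓ).Nonempty} (fun ℓ : ℕ => 1 / (ℓ : ℝ))) := by
  by_cases hper : EventuallyPeriodic x
  · have := (finite_Kset_nonempty_of_eventuallyPeriodic hper).to_subtype
    exact summable_subtype_iff_indicator.1 Summable.of_finite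
  · obtain ⟨c, N, hdescent⟩ := hx.exists_forall_Kset_nonempty_eq_mul_add (by omega)
      (hx.recognizable hq hrec hper) hper
    exact summable_indicator_one_div_of_forall_exists_preimage (T := fun l => q * l + c)
      (fun l => le_add_right (Nat.mul_le_mul_right l hq)) (fun l hl => (Kset_nonempty_iff.1 hl).1)
      hdescent

/-- the series Σ_{ℓ ∈ L} 1/ℓ converges, where
L = {ℓ : K_ℓ ≠ ∅} is the set of lengths of inner lines in RP(x,∞,ε₀). -/
theorem summable_inv_line_lengths
    (ζ : Bool → List Bool) (q : ℕ) (hζ : IsConstLenSubst ζ q)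
    (hprim : IsPrimitive ζ) (hap : IsAperiodic ζ)
    (hζ0 : (ζ false).head? = some false)
    (x : ℕ → Bool) (hx0 : x 0 = false) (hxfix : substSeq ζ q x = x) :
    Summable (Set.indicator {ℓ : ℕ | (Kset x ℓ).Nonempty} (fun ℓ : ℕ => 1 / (ℓ : ℝ))) :=
  summable_inv_line_lengths_general hζ.1 (blockDetermined_of_substSeq_eq hxfix)
    (uniformlyRecurrent_of_isPrimitive hζ hprim hxfix)
end
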